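/- For integers p ≥ d + 1 ≥ 2, let 𝒫 be the low-rank Gaussian covariance model on ℝ^p consisting of all distributions N(0, UUᵀ) where U ∈ ℝ^{p×d} satisfies UᵀU = I_d (so the covariance is the orthogonal projection onto some d-dimensional subspace). Then: (i) if n ≥ d, ε*(𝒫, n, 1) = 0, i.e. a perfect (n, n+1) sample amplification exists; and (ii) if n < d, ε*(𝒫, n, 1) = 1, i.e. every randomized amplification map T satisfies sup over U of ‖N(0,UUᵀ)^{⊗(n+1)} − N(0,UUᵀ)^{⊗n}∘T^{−1}‖_TV = 1. -/

import Mathlib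

open MeasureTheory ProbabilityTheory
open scoped ENNReal NNReal BigOperators

/-- Total variation distance between two measures: `sup_A |P(A) - Q(A)|`. -/
noncomputable def tvDist {X : Type*} [MeasurableSpace X] (μ ν : Measure X) : ℝ :=
  ⨆ A : {s : Set X // MeasurableSet s}, |(μ A).toReal - (ν A).toReal|

/-- Minimax sample amplification error `ε*(𝒫, n, m)` for the family `(P θ)_θ`. -/
noncomputable def ampErr {X Θ : Type*} [MeasurableSpace X] (P : Θ → Measure X)
    (n m : ℕ) : ℝ :=
  ⨅ T : {T : Kernel (Fin n → X) (Fin (n + m) → X) // IsMarkovKernel T},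
    ⨆ θ : Θ, tvDist (Measure.pi fun _ : Fin (n + m) => P θ)
      ((Measure.pi fun _ : Fin n => P θ).bind T.1)

/-- The (possibly singular) Gaussian `N(0, UUᵀ)` on `ℝ^p`, defined as the law of `Uz`
for a standard Gaussian vector `z` on `ℝ^d`. -/
noncomputable def lowRankGaussian (p d : ℕ) (U : Matrix (Fin p) (Fin d) ℝ) :
    Measure (Fin p → ℝ) :=
  Measure.map (fun z : Fin d → ℝ => Matrix.mulVec U z)
    (Measure.pi fun _ : Fin d => gaussianReal 0 1)

/-!
If `n ≥ d`, the first `d` samples almost surely span the column space of `U`, so the orthogonal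
projection onto their span is `U * Uᵀ`, which determines the law. Having learned the law exactly,
one appends fresh samples.

If `n < d`, fix an injective linear map `J : ℝᵈ × ℝ → ℝᵖ` and restrict to the subspaces
`{J (w, ⟪a, w⟫)}` with `a ∈ ℝᵈ`: sampling from such a subspace is noiseless linear regression with
coefficient vector `a`. The data do not change when `a` is translated orthogonally to the span of
the `n` covariates. An output with more than `n` linearly independent covariates has one of them
outside that span, and hence fits the response for almost no translate. By Fubini there is an `a`
for which the amplifier almost never outputs such a configuration, whereas genuine samples
almost surely form one.
-/

section TotalVariation

variable {X Y : Type*} [MeasurableSpace X] [MeasurableSpace Y]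

theorem abs_toReal_measure_sub_le_one (μ ν : Measure X) [IsProbabilityMeasure μ]
    [IsProbabilityMeasure ν] (A : Set X) : |(μ A).toReal - (ν A).toReal| ≤ 1 :=
  abs_sub_le_of_nonneg_of_le measureReal_nonneg measureReal_le_one measureReal_nonneg
    measureReal_le_one

theorem tvDist_nonneg (μ ν : Measure X) : 0 ≤ tvDist μ ν :=
  Real.iSup_nonneg fun _ => abs_nonneg _

theorem tvDist_self (μ : Measure X) : tvDist μ μ = 0 := by
  simp [tvDist]

theorem tvDist_le_one (μ ν : Measure X) [IsProbabilityMeasure μ] [IsProbabilityMeasure ν] :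
    tvDist μ ν ≤ 1 :=
  ciSup_le fun A => abs_toReal_measure_sub_le_one μ ν A

theorem abs_toReal_measure_sub_le_tvDist (μ ν : Measure X) [IsProbabilityMeasure μ]
    [IsProbabilityMeasure ν] {A : Set X} (hA : MeasurableSet A) :
    |(μ A).toReal - (ν A).toReal| ≤ tvDist μ ν :=
  le_ciSup (f := fun A : {s : Set X // MeasurableSet s} => |(μ A).toReal - (ν A).toReal|)
    ⟨1, Set.forall_mem_range.2 fun _ => abs_toReal_measure_sub_le_one μ ν _⟩ ⟨A, hA⟩

theorem one_le_tvDist (μ ν : Measure X) [IsProbabilityMeasure μ] [IsProbabilityMeasure ν]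
    {A : Set X} (hA : MeasurableSet A) (hμ : μ A = 1) (hν : ν A = 0) : 1 ≤ tvDist μ ν := by
  simpa [hμ, hν] using abs_toReal_measure_sub_le_tvDist μ ν hA

theorem tvDist_map_le (μ ν : Measure X) [IsProbabilityMeasure μ] [IsProbabilityMeasure ν]
    {f : X → Y} (hf : Measurable f) : tvDist (μ.map f) (ν.map f) ≤ tvDist μ ν := by
  refine ciSup_le fun B => ?_
  rw [Measure.map_apply hf B.2, Measure.map_apply hf B.2]
  exact abs_toReal_measure_sub_le_tvDist μ ν (hf B.2)

end TotalVariation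

section AmplificationError

theorem map_id_prod_const_apply {α β γ : Type*} [MeasurableSpace α] [MeasurableSpace β]
    [MeasurableSpace γ] (ν : Measure β) [SFinite ν] {g : α × β → γ} (hg : Measurable g) (a : α) :
    (Kernel.id ×ₖ Kernel.const α ν).map g a = ν.map fun b => g (a, b) := by
  rw [Kernel.map_apply _ hg, Kernel.prod_apply, Kernel.id_apply, Kernel.const_apply,
    Measure.dirac_prod, Measure.map_map hg measurable_prodMk_left, Function.comp_def]

variable {X Θ : Type*} [MeasurableSpace X] (P : Θ → Measure X) {n m : ℕ}

theorem ampErr_eq_zero_of_bind_eq (T : Kernel (Fin n → X) (Fin (n + m) → X)) [IsMarkovKernel T]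
    (hT : ∀ θ, (Measure.pi fun _ : Fin n => P θ).bind T = Measure.pi fun _ => P θ) :
    ampErr P n m = 0 := by
  have hnonneg (S : {S : Kernel (Fin n → X) (Fin (n + m) → X) // IsMarkovKernel S}) :
      0 ≤ ⨆ θ, tvDist (Measure.pi fun _ : Fin (n + m) => P θ)
        ((Measure.pi fun _ : Fin n => P θ).bind S.1) :=
    Real.iSup_nonneg fun _ => tvDist_nonneg _ _
  refine le_antisymm ?_ (Real.iInf_nonneg hnonneg)
  refine (ciInf_le ⟨0, Set.forall_mem_range.2 hnonneg⟩ ⟨T, inferInstance⟩).trans ?_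
  simp only [hT, tvDist_self, Real.iSup_const_zero, le_refl]

theorem ampErr_eq_one_of_forall_exists_one_le_tvDist [Nonempty X]
    [∀ θ, IsProbabilityMeasure (P θ)]
    (h : ∀ T : Kernel (Fin n → X) (Fin (n + m) → X), IsMarkovKernel T → ∃ θ,
      1 ≤ tvDist (Measure.pi fun _ => P θ) ((Measure.pi fun _ : Fin n => P θ).bind T)) :
    ampErr P n m = 1 := by
  have : Nonempty {T : Kernel (Fin n → X) (Fin (n + m) → X) // IsMarkovKernel T} :=
    ⟨⟨Kernel.const _ (Measure.dirac fun _ => Classical.arbitrary X), inferInstance⟩⟩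
  have hsup (T : {T : Kernel (Fin n → X) (Fin (n + m) → X) // IsMarkovKernel T}) :
      ⨆ θ, tvDist (Measure.pi fun _ : Fin (n + m) => P θ)
        ((Measure.pi fun _ : Fin n => P θ).bind T.1) = 1 := by
    obtain ⟨T, hT⟩ := T
    obtain ⟨θ, hθ⟩ := h T hT
    have : Nonempty Θ := ⟨θ⟩
    exact le_antisymm (ciSup_le fun _ => tvDist_le_one _ _)
      (le_ciSup_of_le ⟨1, Set.forall_mem_range.2 fun _ => tvDist_le_one _ _⟩ θ hθ)
  simp only [ampErr, hsup, ciInf_const]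

theorem measurable_append :
    Measurable fun x : (Fin n → X) × (Fin m → X) => Fin.append x.1 x.2 :=
  measurable_pi_lambda _ <| (Fin.forall_fin_add _).2
    ⟨fun i => by simpa only [Fin.append_left] using measurable_fst.eval,
     fun j => by simpa only [Fin.append_right] using measurable_snd.eval⟩

theorem map_append_prod_pi (μ : Measure X) [SigmaFinite μ] :
    ((Measure.pi fun _ : Fin n => μ).prod (Measure.pi fun _ : Fin m => μ)).map
      (fun x => Fin.append x.1 x.2) = Measure.pi fun _ : Fin (n + m) => μ := by
  refine (Measure.pi_eq fun s hs => ?_).symm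
  have hpre : (fun x : (Fin n → X) × (Fin m → X) => Fin.append x.1 x.2) ⁻¹' Set.univ.pi s =
      (Set.univ.pi fun i => s (Fin.castAdd m i)) ×ˢ Set.univ.pi fun j => s (Fin.natAdd n j) := by
    ext x
    simp [Set.mem_pi, Fin.forall_fin_add]
  rw [Measure.map_apply measurable_append (.univ_pi hs), hpre, Measure.prod_prod, Measure.pi_pi,
    Measure.pi_pi, Fin.prod_univ_add]

theorem ampErr_eq_zero_of_ae_map_eq [∀ θ, IsProbabilityMeasure (P θ)] {Ω : Type*}
    [MeasurableSpace Ω] (ν : Measure Ω) [IsProbabilityMeasure ν] {f : (Fin n → X) → Ω → X}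
    (hf : Measurable (Function.uncurry f))
    (hfP : ∀ θ, ∀ᵐ x ∂(Measure.pi fun _ : Fin n => P θ), ν.map (f x) = P θ) :
    ampErr P n m = 0 := by
  have hfx (x : Fin n → X) : Measurable (f x) := hf.comp measurable_prodMk_left
  let g : (Fin n → X) × (Fin m → Ω) → (Fin n → X) × (Fin m → X) :=
    fun y => (y.1, fun j => f y.1 (y.2 j))
  have hg : Measurable g := measurable_fst.prodMk <| measurable_pi_lambda _ fun j =>
    hf.comp (measurable_fst.prodMk ((measurable_pi_apply j).comp measurable_snd))
  let T : Kernel (Fin n → X) (Fin (n + m) → X) :=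
    (Kernel.id ×ₖ Kernel.const _ (Measure.pi fun _ : Fin m => ν)).map
      fun y => Fin.append (g y).1 (g y).2
  have : IsMarkovKernel T := Kernel.IsMarkovKernel.map _ (measurable_append.comp hg)
  refine ampErr_eq_zero_of_bind_eq P T fun θ => ?_
  let Q : Kernel (Fin n → X) (Fin (n + m) → X) :=
    (Kernel.id ×ₖ Kernel.const _ (Measure.pi fun _ : Fin m => P θ)).map
      fun y => Fin.append y.1 y.2
  have hTQ : ∀ᵐ x ∂(Measure.pi fun _ : Fin n => P θ), T x = Q x := by
    filter_upwards [hfP θ] with x hx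
    have happend : Measurable fun y : Fin m → X => Fin.append x y :=
      measurable_append.comp measurable_prodMk_left
    have hpi : (Measure.pi fun _ : Fin m => ν).map (fun ω j => f x (ω j)) =
        Measure.pi fun _ : Fin m => P θ := by
      rw [Measure.pi_map_pi fun _ => (hfx x).aemeasurable]
      simp only [hx]
    have hfx' : Measurable fun (ω : Fin m → Ω) j => f x (ω j) :=
      measurable_pi_lambda _ fun j => (hfx x).comp (measurable_pi_apply j)
    calc T x = (Measure.pi fun _ : Fin m => ν).map fun ω => Fin.append x fun j => f x (ω j) :=
          map_id_prod_const_apply _ (measurable_append.comp hg) x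
      _ = (Measure.pi fun _ : Fin m => P θ).map fun y => Fin.append x y := by
          rw [← hpi, Measure.map_map happend hfx', Function.comp_def]
      _ = Q x := (map_id_prod_const_apply _ measurable_append x).symm
  rw [Measure.bind_congr_right hTQ, ← Measure.map_comp _ _ measurable_append,
    ← Measure.compProd_eq_comp_prod, Measure.compProd_const, map_append_prod_pi]

end AmplificationError

section ProductMeasure

variable {X : Type*} [MeasurableSpace X]

theorem measurePreserving_comp_pi {ι κ : Type*} [Fintype ι] [Fintype κ] (μ : Measure X)
    [IsProbabilityMeasure μ] {e : κ → ι} (he : Function.Injective e) :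
    MeasurePreserving (fun x : ι → X => x ∘ e) (Measure.pi fun _ => μ)
      (Measure.pi fun _ => μ) := by
  refine ⟨measurable_pi_lambda _ fun k => measurable_pi_apply (e k), ?_⟩
  have hindep := (iIndepFun_pi (μ := fun _ : ι => μ) (X := fun _ => id)
    fun _ => aemeasurable_id).precomp he
  refine (hindep.map_fun_eq_pi_map fun k => (measurable_pi_apply (e k)).aemeasurable).trans ?_
  simp only [(measurePreserving_eval (fun _ : ι => μ) _).map_eq]

theorem absolutelyContinuous_pi_fin {μ ν : Measure X} [SigmaFinite μ] [SigmaFinite ν]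
    (h : μ ≪ ν) (k : ℕ) : (Measure.pi fun _ : Fin k => μ) ≪ Measure.pi fun _ : Fin k => ν := by
  induction k with
  | zero => rw [Measure.pi_of_empty, Measure.pi_of_empty]
  | succ k ih =>
    rw [← (measurePreserving_piFinSuccAbove (fun _ : Fin (k + 1) => μ) 0).symm.map_eq,
      ← (measurePreserving_piFinSuccAbove (fun _ : Fin (k + 1) => ν) 0).symm.map_eq]
    exact (h.prod ih).map (MeasurableEquiv.measurable _)

end ProductMeasure

section LinearIndependence

variable {E : Type*} [NormedAddCommGroup E] [NormedSpace ℝ E] [FiniteDimensional ℝ E]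
  [MeasurableSpace E] [BorelSpace E]

theorem measurableSet_linearIndependent (ι : Type*) [Finite ι] :
    MeasurableSet {z : ι → E | LinearIndependent ℝ z} :=
  isOpen_setOfPred_linearIndependent.measurableSet

theorem ae_linearIndependent_pi_fin (μ : Measure E) [SigmaFinite μ]
    (hμ : ∀ V : Submodule ℝ E, V ≠ ⊤ → μ V = 0) {k : ℕ} (hk : k ≤ Module.finrank ℝ E) :
    ∀ᵐ z ∂(Measure.pi fun _ : Fin k => μ), LinearIndependent ℝ z := by
  induction k with
  | zero => exact .of_forall fun z => linearIndependent_empty_type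
  | succ k ih =>
    have hmp := (measurePreserving_piFinSuccAbove (fun _ : Fin (k + 1) => μ) 0).symm
    have hmeas := measurableSet_linearIndependent (E := E) (Fin (k + 1))
    rw [← hmp.map_eq, ae_map_iff hmp.measurable.aemeasurable hmeas]
    refine (Measure.ae_prod_iff_ae_ae (hmp.measurable hmeas)).2 ?_
    refine (Measure.ae_ae_comm (p := fun x z => LinearIndependent ℝ
      ((MeasurableEquiv.piFinSuccAbove (fun _ : Fin (k + 1) => E) 0).symm (x, z)))
      (hmp.measurable hmeas)).2 ?_
    filter_upwards [ih (by lia)] with z hz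
    have hspan : Submodule.span ℝ (Set.range z) ≠ ⊤ := fun htop => by
      have hrank := finrank_span_eq_card hz
      rw [htop, finrank_top, Fintype.card_fin] at hrank
      lia
    filter_upwards [compl_mem_ae_iff.2 (hμ _ hspan)] with x hx
    have hcons : (MeasurableEquiv.piFinSuccAbove (fun _ : Fin (k + 1) => E) 0).symm (x, z) =
        Fin.cons x z := by
      simp [MeasurableEquiv.piFinSuccAbove, Fin.consEquiv]
    rw [hcons, linearIndependent_finCons]
    exact ⟨hz, hx⟩

theorem ae_linearIndependent_comp_castLE {μ ν : Measure E} [IsProbabilityMeasure μ]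
    [ν.IsAddHaarMeasure] (hμ : μ ≪ ν) {k n : ℕ} (hk : k ≤ Module.finrank ℝ E) (hkn : k ≤ n) :
    ∀ᵐ z ∂(Measure.pi fun _ : Fin n => μ), LinearIndependent ℝ (z ∘ Fin.castLE hkn) :=
  (measurePreserving_comp_pi μ (Fin.castLE_injective hkn)).quasiMeasurePreserving.ae <|
    ae_linearIndependent_pi_fin μ (fun V hV => hμ (Measure.addHaar_submodule _ V hV)) hk

end LinearIndependence

section LowRankGaussian

theorem absolutelyContinuous_pi_gaussianReal (d : ℕ) :
    (Measure.pi fun _ : Fin d => gaussianReal 0 1) ≪ volume :=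
  absolutelyContinuous_pi_fin (gaussianReal_absolutelyContinuous 0 one_ne_zero) d

variable {p d d' : ℕ}

theorem measurable_mulVec (U : Matrix (Fin p) (Fin d) ℝ) : Measurable U.mulVec :=
  (Continuous.matrix_mulVec continuous_const continuous_id).measurable

instance isProbabilityMeasure_lowRankGaussian (U : Matrix (Fin p) (Fin d) ℝ) :
    IsProbabilityMeasure (lowRankGaussian p d U) :=
  Measure.isProbabilityMeasure_map (measurable_mulVec U).aemeasurable

theorem map_toLp_lowRankGaussian (U : Matrix (Fin p) (Fin d) ℝ) :
    (lowRankGaussian p d U).map (WithLp.toLp 2) = multivariateGaussian 0 (U * U.transpose) := by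
  let L : EuclideanSpace ℝ (Fin d) →L[ℝ] EuclideanSpace ℝ (Fin p) :=
    (Matrix.toEuclideanLin U).toContinuousLinearMap
  have hlaw : (lowRankGaussian p d U).map (WithLp.toLp 2) =
      (stdGaussian (EuclideanSpace ℝ (Fin d))).map L := by
    rw [← map_pi_eq_stdGaussian, lowRankGaussian,
      Measure.map_map (by fun_prop) (measurable_mulVec U),
      Measure.map_map (by fun_prop) (by fun_prop)]
    rfl
  have hadj (x : EuclideanSpace ℝ (Fin p)) : L.adjoint x = Matrix.toEuclideanLin U.transpose x :=
    (LinearMap.congr_fun (Matrix.toEuclideanLin_conjTranspose_eq_adjoint U) x).symm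
  have hS : (U * U.transpose).PosSemidef := Matrix.posSemidef_self_mul_conjTranspose U
  rw [hlaw]
  refine IsGaussian.ext ?_ ?_
  · simp_rw [integral_id_multivariateGaussian', id_eq]
    rw [L.integral_id_map IsGaussian.integrable_id,
      integral_id_stdGaussian, map_zero]
  · ext x y
    rw [covarianceBilin_map IsGaussian.memLp_two_id, covarianceBilin_stdGaussian,
      covarianceBilin_multivariateGaussian hS, innerSL_apply_apply, L.adjoint_inner_left, hadj,
      EuclideanSpace.inner_eq_star_dotProduct, ← Matrix.mulVec_mulVec, dotProduct_comm]
    rfl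

theorem lowRankGaussian_congr {U : Matrix (Fin p) (Fin d) ℝ} {V : Matrix (Fin p) (Fin d') ℝ}
    (h : U * U.transpose = V * V.transpose) : lowRankGaussian p d U = lowRankGaussian p d' V := by
  refine (MeasurableEquiv.toLp 2 (Fin p → ℝ)).map_measurableEquiv_injective ?_
  rw [MeasurableEquiv.coe_toLp, map_toLp_lowRankGaussian, map_toLp_lowRankGaussian, h]

end LowRankGaussian

section ColumnSpaceProjection

variable {ι κ : Type*} [Fintype ι] [Fintype κ] [DecidableEq κ]

/-- The matrix of the orthogonal projection onto the column space of `M`. It has this meaning when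
the columns of `M` are linearly independent, so that `Mᵀ * M` is invertible. -/
noncomputable def colSpaceProj (M : Matrix ι κ ℝ) : Matrix ι ι ℝ :=
  M * (M.transpose * M)⁻¹ * M.transpose

theorem colSpaceProj_mul_of_isUnit (M : Matrix ι κ ℝ) {Z : Matrix κ κ ℝ} (hZ : IsUnit Z) :
    colSpaceProj (M * Z) = colSpaceProj M := by
  have hdet : IsUnit Z.det := Z.isUnit_iff_isUnit_det.1 hZ
  have hdet' : IsUnit Z.transpose.det := Z.isUnit_det_transpose hdet
  calc colSpaceProj (M * Z)
      = M * Z * (Z.transpose * ((M.transpose * M) * Z))⁻¹ * (Z.transpose * M.transpose) := by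
        simp only [colSpaceProj, Matrix.transpose_mul, Matrix.mul_assoc]
    _ = M * (Z * Z⁻¹) * (M.transpose * M)⁻¹ * (Z.transpose⁻¹ * Z.transpose) * M.transpose := by
        rw [Matrix.mul_inv_rev, Matrix.mul_inv_rev]
        simp only [Matrix.mul_assoc]
    _ = colSpaceProj M := by
        rw [Z.mul_nonsing_inv hdet, Z.transpose.nonsing_inv_mul hdet', Matrix.mul_one,
          Matrix.mul_one, colSpaceProj]

theorem colSpaceProj_of_transpose_mul_self {U : Matrix ι κ ℝ} (hU : U.transpose * U = 1) :
    colSpaceProj U = U * U.transpose := by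
  rw [colSpaceProj, hU, inv_one, Matrix.mul_one]

theorem measurable_colSpaceProj_mulVec {α : Type*} [TopologicalSpace α] [MeasurableSpace α]
    [OpensMeasurableSpace α] {M : α → Matrix ι κ ℝ} {w : α → ι → ℝ} (hM : Continuous M)
    (hw : Continuous w) : Measurable fun x => (colSpaceProj (M x)).mulVec (w x) := by
  have hinv (x : α) : (colSpaceProj (M x)).mulVec (w x) = ((M x).transpose * M x).det⁻¹ •
      (M x * ((M x).transpose * M x).adjugate * (M x).transpose).mulVec (w x) := by
    rw [colSpaceProj, Matrix.inv_def, Ring.inverse_eq_inv', Matrix.mul_smul, Matrix.smul_mul,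
      Matrix.smul_mulVec]
  have hgram : Continuous fun x => (M x).transpose * M x := hM.matrix_transpose.matrix_mul hM
  simp_rw [hinv]
  exact hgram.matrix_det.measurable.inv.smul
    (((hM.matrix_mul hgram.matrix_adjugate).matrix_mul hM.matrix_transpose).matrix_mulVec
      hw).measurable

end ColumnSpaceProjection

section Learning

variable {p d n : ℕ}

theorem pi_lowRankGaussian (n : ℕ) (U : Matrix (Fin p) (Fin d) ℝ) :
    (Measure.pi fun _ : Fin n => lowRankGaussian p d U) =
      (Measure.pi fun _ : Fin n => Measure.pi fun _ : Fin d => gaussianReal 0 1).map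
        fun z i => U.mulVec (z i) :=
  (Measure.pi_map_pi fun _ => (measurable_mulVec U).aemeasurable).symm

/-- The matrix whose columns are the first `d` samples. -/
def firstSamples (hdn : d ≤ n) (x : Fin n → Fin p → ℝ) : Matrix (Fin p) (Fin d) ℝ :=
  (Matrix.of (x ∘ Fin.castLE hdn)).transpose

theorem firstSamples_mulVec (hdn : d ≤ n) (U : Matrix (Fin p) (Fin d) ℝ)
    (z : Fin n → Fin d → ℝ) :
    firstSamples hdn (fun i => U.mulVec (z i)) = U * firstSamples hdn z :=
  rfl

theorem ae_isUnit_firstSamples (hdn : d ≤ n) :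
    ∀ᵐ z ∂(Measure.pi fun _ : Fin n => Measure.pi fun _ : Fin d => gaussianReal 0 1),
      IsUnit (firstSamples hdn z) := by
  filter_upwards [ae_linearIndependent_comp_castLE
    (absolutelyContinuous_pi_gaussianReal d) (by simp) hdn] with z hz
  rw [firstSamples, Matrix.isUnit_transpose]
  exact Matrix.linearIndependent_rows_iff_isUnit.1 hz

theorem continuous_firstSamples (hdn : d ≤ n) : Continuous (firstSamples (p := p) hdn) :=
  Continuous.matrix_transpose <| continuous_pi fun i => continuous_apply (Fin.castLE hdn i)

theorem measurableSet_colSpaceProj_firstSamples_eq (hdn : d ≤ n)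
    (Q : Matrix (Fin p) (Fin p) ℝ) :
    MeasurableSet {x : Fin n → Fin p → ℝ | colSpaceProj (firstSamples hdn x) = Q} := by
  have hcols : {x : Fin n → Fin p → ℝ | colSpaceProj (firstSamples hdn x) = Q} =
      ⋂ i, {x | (colSpaceProj (firstSamples hdn x)).mulVec (Pi.single i 1) =
        Q.mulVec (Pi.single i 1)} := by
    rw [← Set.ofPred_forall]
    exact Set.ext fun x => ⟨fun hx i => by rw [hx], Matrix.ext_of_mulVec_single⟩
  rw [hcols]
  exact MeasurableSet.iInter fun i => measurableSet_eq_fun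
    (measurable_colSpaceProj_mulVec (continuous_firstSamples hdn) continuous_const)
    measurable_const

theorem ae_colSpaceProj_firstSamples_eq (hdn : d ≤ n)
    {U : Matrix (Fin p) (Fin d) ℝ} (hU : U.transpose * U = 1) :
    ∀ᵐ x ∂(Measure.pi fun _ : Fin n => lowRankGaussian p d U),
      colSpaceProj (firstSamples hdn x) = U * U.transpose := by
  have hmeas : Measurable fun (z : Fin n → Fin d → ℝ) i => U.mulVec (z i) :=
    measurable_pi_lambda _ fun i => (measurable_mulVec U).comp (measurable_pi_apply i)
  rw [pi_lowRankGaussian, ae_map_iff hmeas.aemeasurable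
    (measurableSet_colSpaceProj_firstSamples_eq hdn _)]
  filter_upwards [ae_isUnit_firstSamples hdn] with z hz
  rw [firstSamples_mulVec, colSpaceProj_mul_of_isUnit U hz, colSpaceProj_of_transpose_mul_self hU]

theorem lowRankGaussian_mul_transpose_self {U : Matrix (Fin p) (Fin d) ℝ}
    (hU : U.transpose * U = 1) :
    lowRankGaussian p p (U * U.transpose) = lowRankGaussian p d U := by
  refine lowRankGaussian_congr ?_
  rw [Matrix.transpose_mul, Matrix.transpose_transpose, Matrix.mul_assoc,
    ← Matrix.mul_assoc U.transpose, hU, Matrix.one_mul]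

theorem ampErr_lowRankGaussian_eq_zero (m : ℕ) (hdn : d ≤ n) :
    ampErr (fun U : {U : Matrix (Fin p) (Fin d) ℝ // U.transpose * U = 1} =>
      lowRankGaussian p d U.1) n m = 0 := by
  refine ampErr_eq_zero_of_ae_map_eq _ (Measure.pi fun _ : Fin p => gaussianReal 0 1)
    (f := fun x w => (colSpaceProj (firstSamples hdn x)).mulVec w)
    (measurable_colSpaceProj_mulVec ((continuous_firstSamples hdn).comp continuous_fst)
      continuous_snd)
    fun U => ?_
  filter_upwards [ae_colSpaceProj_firstSamples_eq hdn U.2] with x hx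
  rw [hx]
  exact lowRankGaussian_mul_transpose_self U.2

end Learning

section NoiselessRegression

theorem exists_notMem_span {K V ι κ : Type*} [DivisionRing K] [AddCommGroup V]
    [Module K V] [Fintype ι] [Fintype κ] {u : κ → V} (hu : LinearIndependent K u) (w : ι → V)
    (hcard : Fintype.card ι < Fintype.card κ) : ∃ j, u j ∉ Submodule.span K (Set.range w) := by
  by_contra! hmem
  have hle : Submodule.span K (Set.range u) ≤ Submodule.span K (Set.range w) :=
    Submodule.span_le.2 (Set.range_subset_iff.2 hmem)
  have := FiniteDimensional.span_of_finite K (Set.finite_range w)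
  have := Submodule.finrank_mono hle
  rw [finrank_span_eq_card hu] at this
  exact hcard.not_ge (this.trans (finrank_range_le_card w))

theorem ae_linearMap_ne {E : Type*} [NormedAddCommGroup E] [NormedSpace ℝ E]
    [FiniteDimensional ℝ E] [MeasurableSpace E] [BorelSpace E] (μ : Measure E) [μ.IsAddHaarMeasure]
    {f : E →ₗ[ℝ] ℝ} (hf : f ≠ 0) (c : ℝ) : ∀ᵐ x ∂μ, f x ≠ c := by
  have hsurj : Function.Surjective f := LinearMap.surjective hf
  exact (ae_comp_linearMap_mem_iff f μ volume hsurj (measurableSet_singleton c).compl).2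
    (Measure.ae_ne volume c)

variable {E : Type*} [NormedAddCommGroup E] [InnerProductSpace ℝ E] {k m n : ℕ}

/-- One observation of noiseless linear regression with coefficient vector `a` at covariate `w`:
the covariate together with its response. -/
noncomputable def regressionMap (a : E) : E →L[ℝ] E × ℝ :=
  (ContinuousLinearMap.id ℝ E).prod (innerSL ℝ a)

theorem regressionMap_apply (a w : E) : regressionMap a w = (w, inner ℝ a w) := rfl

theorem regressionMap_add_of_inner_eq_zero (a : E) {g w : E} (h : inner ℝ g w = 0) :
    regressionMap (a + g) w = regressionMap a w := by
  rw [regressionMap_apply, regressionMap_apply, inner_add_left, h, add_zero]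

/-- Samples of size `m` that interpolate the regression function of `a` and whose first `k`
covariates are linearly independent. -/
def interpolatingSamples (hkm : k ≤ m) (a : E) : Set (Fin m → E × ℝ) :=
  {y | LinearIndependent ℝ (fun i => (y (Fin.castLE hkm i)).1) ∧ ∀ i, y i = regressionMap a (y i).1}

variable [FiniteDimensional ℝ E] [MeasurableSpace E] [BorelSpace E]

theorem measurableSet_interpolatingSamples_prod (hkm : k ≤ m) :
    MeasurableSet {x : E × (Fin m → E × ℝ) | x.2 ∈ interpolatingSamples hkm x.1} := by
  have hindep : MeasurableSet {x : E × (Fin m → E × ℝ) |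
      LinearIndependent ℝ fun i => (x.2 (Fin.castLE hkm i)).1} :=
    (measurableSet_linearIndependent (E := E) (Fin k)).preimage (by fun_prop)
  have hgraph (i : Fin m) : MeasurableSet {x : E × (Fin m → E × ℝ) |
      x.2 i = regressionMap x.1 (x.2 i).1} := by
    simp only [regressionMap_apply]
    exact measurableSet_eq_fun (by fun_prop) (by fun_prop)
  have hinter : {x : E × (Fin m → E × ℝ) | x.2 ∈ interpolatingSamples hkm x.1} =
      {x | LinearIndependent ℝ fun i => (x.2 (Fin.castLE hkm i)).1} ∩
        ⋂ i, {x | x.2 i = regressionMap x.1 (x.2 i).1} := by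
    ext x
    simp only [interpolatingSamples, Set.mem_ofPred_eq, Set.mem_inter_iff, Set.mem_iInter]
  rw [hinter]
  exact hindep.inter (MeasurableSet.iInter hgraph)

theorem measurableSet_interpolatingSamples (hkm : k ≤ m) (a : E) :
    MeasurableSet (interpolatingSamples hkm a) :=
  (measurableSet_interpolatingSamples_prod hkm).preimage measurable_prodMk_left

theorem measurable_kernel_interpolatingSamples (hkm : k ≤ m)
    (T : Kernel (Fin n → E × ℝ) (Fin m → E × ℝ)) [IsSFiniteKernel T] :
    Measurable fun x : E × (Fin n → E) =>
      T (fun i => regressionMap x.1 (x.2 i)) (interpolatingSamples hkm x.1) := by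
  have hdata : Measurable fun (x : E × (Fin n → E)) i => regressionMap x.1 (x.2 i) := by
    simp only [regressionMap_apply]
    fun_prop
  exact Kernel.measurable_kernel_prodMk_left (κ := T.comap _ hdata)
    ((measurableSet_interpolatingSamples_prod hkm).preimage
      (f := fun y : (E × (Fin n → E)) × (Fin m → E × ℝ) => (y.1.1, y.2)) (by fun_prop))

theorem ae_notMem_interpolatingSamples_add (hnk : n < k) (hkm : k ≤ m) (w : Fin n → E) (a : E)
    (y : Fin m → E × ℝ) :
    ∀ᵐ g : (Submodule.span ℝ (Set.range w))ᗮ ∂Measure.addHaar,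
      y ∉ interpolatingSamples hkm (a + g.1) := by
  by_cases hy : LinearIndependent ℝ fun i => (y (Fin.castLE hkm i)).1
  swap
  · exact .of_forall fun _ hmem => hy hmem.1
  obtain ⟨j, hj⟩ := exists_notMem_span hy w (by simpa using hnk)
  let f : (Submodule.span ℝ (Set.range w))ᗮ →ₗ[ℝ] ℝ :=
    (innerₛₗ ℝ (y (Fin.castLE hkm j)).1).comp (Submodule.subtype _)
  have hf : f ≠ 0 := fun hf0 => hj <| by
    rw [← Submodule.orthogonal_orthogonal (Submodule.span ℝ (Set.range w)),
      Submodule.mem_orthogonal']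
    exact fun g hg => LinearMap.congr_fun hf0 ⟨g, hg⟩
  filter_upwards [ae_linearMap_ne Measure.addHaar hf
    ((y (Fin.castLE hkm j)).2 - inner ℝ a (y (Fin.castLE hkm j)).1)] with g hg hmem
  refine hg ?_
  have hresponse := congrArg Prod.snd (hmem.2 (Fin.castLE hkm j))
  rw [regressionMap_apply, inner_add_left] at hresponse
  rw [hresponse, add_sub_cancel_left, real_inner_comm]
  rfl

theorem ae_kernel_interpolatingSamples_eq_zero (hnk : n < k) (hkm : k ≤ m)
    (T : Kernel (Fin n → E × ℝ) (Fin m → E × ℝ)) [IsSFiniteKernel T] (w : Fin n → E) :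
    ∀ᵐ a, T (fun i => regressionMap a (w i)) (interpolatingSamples hkm a) = 0 := by
  refine ae_mem_of_ae_add_linearMap_mem (Submodule.subtype (Submodule.span ℝ (Set.range w))ᗮ)
    Measure.addHaar volume ((measurable_kernel_interpolatingSamples hkm T).comp
      measurable_prodMk_right (measurableSet_singleton 0)) fun a => ?_
  have hdata (g : (Submodule.span ℝ (Set.range w))ᗮ) :
      (fun i => regressionMap (a + g.1) (w i)) = fun i => regressionMap a (w i) :=
    funext fun i => regressionMap_add_of_inner_eq_zero a <|
      (Submodule.mem_orthogonal' _ _).1 g.2 _ (Submodule.subset_span (Set.mem_range_self i))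
  have hmeas : MeasurableSet {x : (Submodule.span ℝ (Set.range w))ᗮ × (Fin m → E × ℝ) |
      x.2 ∉ interpolatingSamples hkm (a + x.1.1)} :=
    ((measurableSet_interpolatingSamples_prod hkm).preimage
      (f := fun x : (Submodule.span ℝ (Set.range w))ᗮ × (Fin m → E × ℝ) => (a + x.1.1, x.2))
      (by fun_prop)).compl
  have hae := (Measure.ae_ae_comm (μ := Measure.addHaar)
    (ν := T fun i => regressionMap a (w i)) hmeas).2
    (.of_forall (ae_notMem_interpolatingSamples_add hnk hkm w a))
  filter_upwards [hae] with g hg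
  change T (fun i => regressionMap (a + g.1) (w i)) (interpolatingSamples hkm (a + g.1)) = 0
  rw [hdata g]
  exact measure_eq_zero_iff_ae_notMem.2 hg

theorem exists_ae_kernel_interpolatingSamples_eq_zero (hnk : n < k) (hkm : k ≤ m)
    (T : Kernel (Fin n → E × ℝ) (Fin m → E × ℝ)) [IsSFiniteKernel T] :
    ∃ a : E, ∀ᵐ w ∂(Measure.pi fun _ : Fin n => (volume : Measure E)),
      T (fun i => regressionMap a (w i)) (interpolatingSamples hkm a) = 0 :=
  ((Measure.ae_ae_comm (p := fun (a : E) (w : Fin n → E) =>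
      T (fun i => regressionMap a (w i)) (interpolatingSamples hkm a) = 0)
    (measurable_kernel_interpolatingSamples hkm T (measurableSet_singleton 0))).2
    (.of_forall (ae_kernel_interpolatingSamples_eq_zero hnk hkm T))).exists

theorem pi_map_interpolatingSamples_eq_one {μ : Measure E} [IsProbabilityMeasure μ]
    (hμ : μ ≪ volume) (hk : k ≤ Module.finrank ℝ E) (hkm : k ≤ m) (a : E) :
    (Measure.pi fun _ : Fin m => μ.map (regressionMap a)) (interpolatingSamples hkm a) = 1 := by
  have hmeas : Measurable (regressionMap a) := (regressionMap a).continuous.measurable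
  have hpi : Measurable fun (w : Fin m → E) i => regressionMap a (w i) := by fun_prop
  have : IsProbabilityMeasure (μ.map (regressionMap a)) :=
    Measure.isProbabilityMeasure_map hmeas.aemeasurable
  rw [← mem_ae_iff_prob_eq_one (measurableSet_interpolatingSamples hkm a),
    ← Measure.pi_map_pi fun _ => hmeas.aemeasurable, mem_ae_map_iff hpi.aemeasurable
      (measurableSet_interpolatingSamples hkm a)]
  filter_upwards [ae_linearIndependent_comp_castLE hμ hk hkm] with w hw
  exact ⟨hw, fun _ => rfl⟩

theorem exists_one_le_tvDist_regressionMap (hn : n < Module.finrank ℝ E) (hnm : n < m)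
    (T : Kernel (Fin n → E × ℝ) (Fin m → E × ℝ)) [IsMarkovKernel T] :
    ∃ a : E, ∀ μ : Measure E, IsProbabilityMeasure μ → μ ≪ volume →
      1 ≤ tvDist (Measure.pi fun _ : Fin m => μ.map (regressionMap a))
        ((Measure.pi fun _ : Fin n => μ.map (regressionMap a)).bind T) := by
  obtain ⟨a, ha⟩ := exists_ae_kernel_interpolatingSamples_eq_zero n.lt_succ_self hnm T
  refine ⟨a, fun μ _ hμ => ?_⟩
  have hmeas : Measurable (regressionMap a) := (regressionMap a).continuous.measurable
  have hpi : Measurable fun (w : Fin n → E) i => regressionMap a (w i) := by fun_prop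
  have : IsProbabilityMeasure (μ.map (regressionMap a)) :=
    Measure.isProbabilityMeasure_map hmeas.aemeasurable
  have hA := measurableSet_interpolatingSamples (E := E) hnm a
  refine one_le_tvDist _ _ hA (pi_map_interpolatingSamples_eq_one hμ hn hnm a) ?_
  rw [Measure.bind_apply hA T.aemeasurable, lintegral_eq_zero_iff (T.measurable_coe hA),
    ← Measure.pi_map_pi fun _ => hmeas.aemeasurable]
  exact (ae_map_iff hpi.aemeasurable (T.measurable_coe hA (measurableSet_singleton 0))).2
    (absolutelyContinuous_pi_fin hμ n ha)

end NoiselessRegression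

section Transfer

theorem tvDist_pi_bind_le_of_leftInverse {X Y : Type*} [MeasurableSpace X] [MeasurableSpace Y]
    {f : X → Y} {g : Y → X} (hf : Measurable f) (hg : Measurable g)
    (hgf : Function.LeftInverse g f) {n m : ℕ} (T : Kernel (Fin n → Y) (Fin m → Y))
    [IsMarkovKernel T] (μ : Measure X) [IsProbabilityMeasure μ] :
    tvDist (Measure.pi fun _ => μ) ((Measure.pi fun _ => μ).bind
        ((T.map fun y i => g (y i)).comap (fun x i => f (x i)) (by fun_prop))) ≤
      tvDist (Measure.pi fun _ => μ.map f) ((Measure.pi fun _ => μ.map f).bind T) := by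
  have hfn : Measurable fun (x : Fin n → X) i => f (x i) := by fun_prop
  have hgm : Measurable fun (y : Fin m → Y) i => g (y i) := by fun_prop
  have : IsProbabilityMeasure (μ.map f) := Measure.isProbabilityMeasure_map hf.aemeasurable
  have hpi : (Measure.pi fun _ : Fin m => μ.map f).map (fun y i => g (y i)) =
      Measure.pi fun _ => μ := by
    rw [Measure.pi_map_pi fun _ => hg.aemeasurable, Measure.map_map hg hf, hgf.comp_eq_id,
      Measure.map_id]
  have hbind : ((Measure.pi fun _ : Fin n => μ.map f).bind T).map (fun y i => g (y i)) =
      (Measure.pi fun _ => μ).bind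
        ((T.map fun y i => g (y i)).comap (fun x i => f (x i)) hfn) := by
    rw [Measure.map_comp _ _ hgm, ← Measure.pi_map_pi fun _ => hf.aemeasurable,
      ← Measure.deterministic_comp_eq_map hfn, Measure.comp_assoc,
      Kernel.comp_deterministic_eq_comap]
  rw [← hpi, ← hbind]
  exact tvDist_map_le _ _ hgm

end Transfer

section Impossibility

theorem exists_transpose_mul_self_mulVec_eq {E : Type*} [AddCommGroup E] [Module ℝ E] {p d : ℕ}
    (hE : Module.finrank ℝ E = d) {φ : E →ₗ[ℝ] Fin p → ℝ} (hφ : Function.Injective φ) :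
    ∃ (U : Matrix (Fin p) (Fin d) ℝ) (B : (Fin d → ℝ) ≃ₗ[ℝ] E),
      U.transpose * U = 1 ∧ ∀ z, U.mulVec z = φ (B z) := by
  let ψ : E →ₗ[ℝ] EuclideanSpace ℝ (Fin p) := (WithLp.linearEquiv 2 ℝ (Fin p → ℝ)).symm.comp φ
  have hψ : Function.Injective ψ := (WithLp.linearEquiv 2 ℝ (Fin p → ℝ)).symm.injective.comp hφ
  let b := (stdOrthonormalBasis ℝ (LinearMap.range ψ)).reindex
    (finCongr ((LinearMap.finrank_range_of_inj hψ).trans hE))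
  let B : (Fin d → ℝ) ≃ₗ[ℝ] E := b.toBasis.equivFun.symm.trans (LinearEquiv.ofInjective ψ hψ).symm
  have hb (i : Fin d) : φ (B (Pi.single i 1)) = (b i : EuclideanSpace ℝ (Fin p)).ofLp := by
    have : ψ (B (Pi.single i 1)) = b i := by
      simp [B, ← LinearEquiv.ofInjective_apply (h := hψ)]
    exact congrArg WithLp.ofLp this
  refine ⟨LinearMap.toMatrix' (φ.comp B.toLinearMap), B, ?_, fun z => ?_⟩
  · ext i j
    have hij := orthonormal_iff_ite.1 b.orthonormal i j
    rw [Submodule.coe_inner, EuclideanSpace.inner_eq_star_dotProduct, dotProduct_comm] at hij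
    rw [Matrix.one_apply, ← hij, ← hb, ← hb]
    simp [Matrix.mul_apply, dotProduct, LinearMap.toMatrix'_apply]
  · exact LinearMap.toMatrix'_mulVec _ _

theorem exists_lowRankGaussian_eq_map {E : Type*} [NormedAddCommGroup E] [NormedSpace ℝ E]
    [FiniteDimensional ℝ E] [MeasurableSpace E] [BorelSpace E] (ν : Measure E) [ν.IsAddHaarMeasure]
    {p d : ℕ} (hE : Module.finrank ℝ E = d) {φ : E →ₗ[ℝ] Fin p → ℝ} (hφ : Function.Injective φ) :
    ∃ (U : Matrix (Fin p) (Fin d) ℝ) (μ : Measure E), U.transpose * U = 1 ∧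
      IsProbabilityMeasure μ ∧ μ ≪ ν ∧ lowRankGaussian p d U = μ.map φ := by
  obtain ⟨U, B, hU, hUB⟩ := exists_transpose_mul_self_mulVec_eq hE hφ
  have hB : Measurable B := B.toContinuousLinearEquiv.continuous.measurable
  have hφmeas : Measurable φ := φ.continuous_of_finiteDimensional.measurable
  have : ((volume : Measure (Fin d → ℝ)).map B).IsAddHaarMeasure :=
    B.toContinuousLinearEquiv.isAddHaarMeasure_map volume
  refine ⟨U, (Measure.pi fun _ => gaussianReal 0 1).map B, hU,
    Measure.isProbabilityMeasure_map hB.aemeasurable,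
    ((absolutelyContinuous_pi_gaussianReal d).map hB).trans
      (Measure.absolutelyContinuous_isAddHaarMeasure _ _), ?_⟩
  rw [Measure.map_map hφmeas hB]
  exact congrArg (Measure.map · _) (funext hUB)

theorem exists_one_le_tvDist_lowRankGaussian {p d n m : ℕ} (hdp : d < p) (hnd : n < d)
    (hnm : n < m) (T : Kernel (Fin n → Fin p → ℝ) (Fin m → Fin p → ℝ)) [IsMarkovKernel T] :
    ∃ U : Matrix (Fin p) (Fin d) ℝ, U.transpose * U = 1 ∧
      1 ≤ tvDist (Measure.pi fun _ => lowRankGaussian p d U)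
        ((Measure.pi fun _ => lowRankGaussian p d U).bind T) := by
  let E := EuclideanSpace ℝ (Fin d)
  have hE : Module.finrank ℝ E = d := finrank_euclideanSpace_fin
  obtain ⟨J, hJ⟩ : ∃ J : E × ℝ →ₗ[ℝ] Fin p → ℝ, Function.Injective J :=
    finrank_le_iff_exists_linearMap.1 (by simpa [hE] using hdp)
  obtain ⟨P, hPJ⟩ := J.exists_leftInverse_of_injective (LinearMap.ker_eq_bot.2 hJ)
  have hJmeas : Measurable J := J.continuous_of_finiteDimensional.measurable
  have hPmeas : Measurable P := P.continuous_of_finiteDimensional.measurable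
  have : IsMarkovKernel (T.map fun y i => P (y i)) := Kernel.IsMarkovKernel.map _ (by fun_prop)
  obtain ⟨a, ha⟩ := exists_one_le_tvDist_regressionMap (hnd.trans_eq hE.symm) hnm
    ((T.map fun y i => P (y i)).comap (fun x i => J (x i)) (by fun_prop))
  have hinj : Function.Injective (J.comp (regressionMap a).toLinearMap) :=
    hJ.comp fun w w' h => congrArg Prod.fst h
  obtain ⟨U, μ, hU, _, hμ, hlaw⟩ := exists_lowRankGaussian_eq_map volume hE hinj
  have hreg : Measurable (regressionMap a) := (regressionMap a).continuous.measurable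
  have : IsProbabilityMeasure (μ.map (regressionMap a)) :=
    Measure.isProbabilityMeasure_map hreg.aemeasurable
  refine ⟨U, hU, ?_⟩
  have hlaw' : lowRankGaussian p d U = (μ.map (regressionMap a)).map J :=
    hlaw.trans (Measure.map_map hJmeas hreg).symm
  rw [hlaw']
  exact (ha μ inferInstance hμ).trans
    (tvDist_pi_bind_le_of_leftInverse hJmeas hPmeas (LinearMap.congr_fun hPJ) T _)

theorem ampErr_lowRankGaussian_eq_one {p d n m : ℕ} (hdp : d < p) (hnd : n < d) (hm : 0 < m) :
    ampErr (fun U : {U : Matrix (Fin p) (Fin d) ℝ // U.transpose * U = 1} =>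
      lowRankGaussian p d U.1) n m = 1 :=
  ampErr_eq_one_of_forall_exists_one_le_tvDist _ fun T _ =>
    let ⟨U, hU, hTU⟩ := exists_one_le_tvDist_lowRankGaussian hdp hnd (Nat.lt_add_of_pos_right hm) T
    ⟨⟨U, hU⟩, hTU⟩

end Impossibility

theorem lowRankGaussian_amplification_general (p d n m : ℕ) :
    (d ≤ n →
      ampErr (fun U : {U : Matrix (Fin p) (Fin d) ℝ // U.transpose * U = 1} =>
        lowRankGaussian p d U.1) n m = 0) ∧
    (d < p → n < d → 0 < m →
      ampErr (fun U : {U : Matrix (Fin p) (Fin d) ℝ // U.transpose * U = 1} =>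
        lowRankGaussian p d U.1) n m = 1) :=
  ⟨ampErr_lowRankGaussian_eq_zero m, ampErr_lowRankGaussian_eq_one⟩

/-- Low-rank covariance model: amplification is as hard as learning.
For `p ≥ d + 1`, consider the class of all `N(0, UUᵀ)` with `U ∈ ℝ^{p×d}`,
`UᵀU = I_d`.  Then: (i) if `n ≥ d` a perfect `(n, n+1)` amplification exists,
`ε*(𝒫, n, 1) = 0`; and (ii) if `n < d` then `ε*(𝒫, n, 1) = 1`. -/
theorem lowRankGaussian_amplification (p d : ℕ) (hd : 1 ≤ d) (hp : d + 1 ≤ p)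
    (n : ℕ) (hn : 1 ≤ n) :
    (d ≤ n →
      ampErr (fun U : {U : Matrix (Fin p) (Fin d) ℝ // U.transpose * U = 1} =>
        lowRankGaussian p d U.1) n 1 = 0) ∧
    (n < d →
      ampErr (fun U : {U : Matrix (Fin p) (Fin d) ℝ // U.transpose * U = 1} =>
        lowRankGaussian p d U.1) n 1 = 1) :=
  let h := lowRankGaussian_amplification_general p d n 1
  ⟨h.1, fun hnd => h.2 hp hnd one_pos⟩
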